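/- Let x_1, …, x_n be unit vectors in ℝ^d (n ≥ 2) such that |⟨x_i, x_j⟩| ≤ ε for all i ≠ j, and let all bandwidths equal σ > 0. Then for all i ≠ j, e^{−2ε/σ²} ≤ (n−1)·p_{j|i} ≤ e^{2ε/σ²}, and consequently e^{−2ε/σ²} ≤ C(n,2)·p_{ij} ≤ e^{2ε/σ²}. -/

import Mathlib

open Finset

noncomputable section

/-- t-SNE conditional probability `p_{j|i}`. -/
def pcond {N d : ℕ} (x : Fin N → EuclideanSpace ℝ (Fin d)) (σ : Fin N → ℝ) (i j : Fin N) : ℝ :=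
  Real.exp (-‖x i - x j‖ ^ 2 / (2 * σ i ^ 2)) /
    ∑ k ∈ Finset.univ.erase i, Real.exp (-‖x i - x k‖ ^ 2 / (2 * σ i ^ 2))

/-- t-SNE pair probability `p_{ij} = (p_{i|j} + p_{j|i})/N`. -/
def pmat {N d : ℕ} (x : Fin N → EuclideanSpace ℝ (Fin d)) (σ : Fin N → ℝ) (i j : Fin N) : ℝ :=
  (pcond x σ j i + pcond x σ i j) / N

/-- if `x_1, …, x_n` (`n ≥ 2`) are unit vectors in `ℝ^d` with
`|⟨x_i, x_j⟩| ≤ ε` for all `i ≠ j`, and all bandwidths equal `σ > 0`, then for all `i ≠ j`,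
`e^{-2ε/σ²} ≤ (n-1)·p_{j|i} ≤ e^{2ε/σ²}` and `e^{-2ε/σ²} ≤ C(n,2)·p_{ij} ≤ e^{2ε/σ²}`. -/
theorem stmt12 (d n : ℕ) (hn : 2 ≤ n) (x : Fin n → EuclideanSpace ℝ (Fin d))
    (hx : ∀ i, ‖x i‖ = 1) (ε : ℝ) (σ : ℝ) (hσ : 0 < σ)
    (hip : ∀ i j : Fin n, i ≠ j → |(inner ℝ (x i) (x j) : ℝ)| ≤ ε) :
    ∀ i j : Fin n, i ≠ j →
      (Real.exp (-(2 * ε) / σ ^ 2) ≤ ((n : ℝ) - 1) * pcond x (fun _ => σ) i j ∧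
        ((n : ℝ) - 1) * pcond x (fun _ => σ) i j ≤ Real.exp (2 * ε / σ ^ 2)) ∧
      (Real.exp (-(2 * ε) / σ ^ 2) ≤ ((n : ℝ) * ((n : ℝ) - 1) / 2) * pmat x (fun _ => σ) i j ∧
        ((n : ℝ) * ((n : ℝ) - 1) / 2) * pmat x (fun _ => σ) i j ≤ Real.exp (2 * ε / σ ^ 2)) := by
  have hn1 : (0 : ℝ) < (n : ℝ) - 1 := by
    have : (2 : ℝ) ≤ n := by exact_mod_cast hn
    linarith
  have hs : 0 < σ ^ 2 := by positivity
  have key : ∀ i k : Fin n, i ≠ k →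
      Real.exp ((-1 - ε) / σ ^ 2) ≤ Real.exp (-‖x i - x k‖ ^ 2 / (2 * σ ^ 2)) ∧
      Real.exp (-‖x i - x k‖ ^ 2 / (2 * σ ^ 2)) ≤ Real.exp ((-1 + ε) / σ ^ 2) := by
    intro i k hik
    have h := abs_le.mp (hip i k hik)
    have e : -‖x i - x k‖ ^ 2 / (2 * σ ^ 2) = (-1 + inner ℝ (x i) (x k)) / σ ^ 2 := by
      rw [norm_sub_sq_real, hx, hx]
      field_simp
      ring
    rw [e, Real.exp_le_exp, Real.exp_le_exp]
    constructor <;> apply div_le_div_of_nonneg_right _ hs.le <;> linarith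
  have main : ∀ i j : Fin n, i ≠ j →
      (Real.exp (-(2 * ε) / σ ^ 2) ≤ ((n : ℝ) - 1) * pcond x (fun _ => σ) i j ∧
        ((n : ℝ) - 1) * pcond x (fun _ => σ) i j ≤ Real.exp (2 * ε / σ ^ 2)) := by
    intro i j hij
    have hcard : (((Finset.univ.erase i).card : ℕ) : ℝ) = (n : ℝ) - 1 := by
      rw [Finset.card_erase_of_mem (Finset.mem_univ i), Finset.card_univ, Fintype.card_fin,
        Nat.cast_sub (by omega)]
      simp
    have hlo := Finset.card_nsmul_le_sum (Finset.univ.erase i)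
      (fun k => Real.exp (-‖x i - x k‖ ^ 2 / (2 * σ ^ 2))) _
      (fun k hk => (key i k (Finset.ne_of_mem_erase hk).symm).1)
    have hhi := Finset.sum_le_card_nsmul (Finset.univ.erase i)
      (fun k => Real.exp (-‖x i - x k‖ ^ 2 / (2 * σ ^ 2))) _
      (fun k hk => (key i k (Finset.ne_of_mem_erase hk).symm).2)
    rw [nsmul_eq_mul, hcard] at hlo hhi
    obtain ⟨k1, k2⟩ := key i j hij
    unfold pcond
    dsimp only at hlo hhi ⊢
    have hS := lt_of_lt_of_le (mul_pos hn1 (Real.exp_pos _)) hlo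
    have e1 : Real.exp (-(2 * ε) / σ ^ 2) * Real.exp ((-1 + ε) / σ ^ 2)
        = Real.exp ((-1 - ε) / σ ^ 2) := by
      rw [← Real.exp_add]; congr 1; ring
    have e2 : Real.exp (2 * ε / σ ^ 2) * Real.exp ((-1 - ε) / σ ^ 2)
        = Real.exp ((-1 + ε) / σ ^ 2) := by
      rw [← Real.exp_add]; congr 1; ring
    rw [← mul_div_assoc, le_div_iff₀ hS, div_le_iff₀ hS]
    constructor
    · calc _ ≤ Real.exp (-(2 * ε) / σ ^ 2) * (((n : ℝ) - 1) * Real.exp ((-1 + ε) / σ ^ 2)) :=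
            mul_le_mul_of_nonneg_left hhi (Real.exp_pos _).le
        _ = ((n : ℝ) - 1) * Real.exp ((-1 - ε) / σ ^ 2) := by rw [← e1]; ring
        _ ≤ _ := mul_le_mul_of_nonneg_left k1 hn1.le
    · calc _ ≤ ((n : ℝ) - 1) * Real.exp ((-1 + ε) / σ ^ 2) :=
            mul_le_mul_of_nonneg_left k2 hn1.le
        _ = Real.exp (2 * ε / σ ^ 2) * (((n : ℝ) - 1) * Real.exp ((-1 - ε) / σ ^ 2)) := by
            rw [← e2]; ring
        _ ≤ _ := mul_le_mul_of_nonneg_left hlo (Real.exp_pos _).le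
  intro i j hij
  refine ⟨main i j hij, ?_⟩
  obtain ⟨a1, a2⟩ := main i j hij
  obtain ⟨b1, b2⟩ := main j i hij.symm
  have hn0 : (n : ℝ) ≠ 0 := by
    intro h
    rw [h] at hn1
    linarith
  have e : ((n : ℝ) * ((n : ℝ) - 1) / 2) * pmat x (fun _ => σ) i j
      = (((n : ℝ) - 1) * pcond x (fun _ => σ) j i
        + ((n : ℝ) - 1) * pcond x (fun _ => σ) i j) / 2 := by
    unfold pmat
    field_simp
  rw [e]
  constructor <;> linarith

end
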